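/- Suppose F : R → C is smooth and supported in a compact interval [a,b], and h : [a,b] → R is smooth with |h'(t)| ≥ R > 0 on [a,b] and |h^{(j)}(t)| ≤ C_j·Y·Q^{−j} for all j ≥ 2, where Y ≥ 1, Q > 0. If moreover |F^{(j)}(t)| ≤ C'_j·X·U^{−j} for all j ≥ 0 with X, U > 0, then for every A ≥ 0 there is a constant depending only on A and the C_j such that |∫ F(t)·e(h(t)) dt| ≤ C(A)·(b−a)·X·( (Q·R/√Y)^{−A} + (R·U)^{−A} ), where e(x) = e^{2πi x}. -/

import Mathlib

open Real

lemma nsp_smul_bound {E : Type*} [NormedAddCommGroup E] [NormedSpace ℝ E] {s : Set ℝ}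
    (hs : UniqueDiffOn ℝ s) {f : ℝ → ℝ} {F : ℝ → E}
    (hf : ContDiffOn ℝ (⊤ : ℕ∞) f s) (hF : ContDiffOn ℝ (⊤ : ℕ∞) F s) {t : ℝ} (ht : t ∈ s) (n : ℕ) :
    ‖iteratedDerivWithin n (fun x => f x • F x) s t‖ ≤
      ∑ i ∈ Finset.range (n + 1), (n.choose i : ℝ) * ‖iteratedDerivWithin i f s t‖ *
        ‖iteratedDerivWithin (n - i) F s t‖ := by
  have := norm_iteratedFDerivWithin_smul_le (n := n) hf hF hs ht (by exact_mod_cast le_top)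
  simpa only [norm_iteratedFDerivWithin_eq_norm_iteratedDerivWithin] using this

lemma nsp_smul_bound' {E : Type*} [NormedAddCommGroup E] [NormedSpace ℝ E] {s : Set ℝ}
    (hs : UniqueDiffOn ℝ s) {f : ℝ → ℝ} {F : ℝ → E}
    (hf : ContDiffOn ℝ (⊤ : ℕ∞) f s) (hF : ContDiffOn ℝ (⊤ : ℕ∞) F s) {t : ℝ} (ht : t ∈ s) (n : ℕ)
    (K L : ℕ → ℝ) (hK : ∀ i ≤ n, ‖iteratedDerivWithin i f s t‖ ≤ K i)
    (hL : ∀ i ≤ n, ‖iteratedDerivWithin i F s t‖ ≤ L i) :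
    ‖iteratedDerivWithin n (fun x => f x • F x) s t‖ ≤
      ∑ i ∈ Finset.range (n + 1), (n.choose i : ℝ) * K i * L (n - i) := by
  refine (nsp_smul_bound hs hf hF ht n).trans (Finset.sum_le_sum fun i hi => ?_)
  have hi' : i ≤ n := by simpa [Nat.lt_succ_iff] using hi
  have h1 := hK i hi'
  have h2 := hL (n - i) (Nat.sub_le _ _)
  have h0 : 0 ≤ K i := (norm_nonneg _).trans h1
  gcongr

lemma nsp_g_smooth {a b T : ℝ} {h : ℝ → ℝ} (hT : 1 ≤ T)
    (hh : ContDiff ℝ (⊤ : ℕ∞) h) (hd : ∀ t ∈ Set.Icc a b, T ≤ |deriv h t|) :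
    ContDiffOn ℝ (⊤ : ℕ∞) (fun t => T * (deriv h t)⁻¹) (Set.Icc a b) := by
  have h1 : ContDiff ℝ (⊤ : ℕ∞) (deriv h) := by
    have := (contDiff_infty_iff_deriv).1 hh
    exact this.2
  refine contDiffOn_const.mul (h1.contDiffOn.inv fun t ht h0 => ?_)
  have := hd t ht
  rw [h0, abs_zero] at this
  linarith

lemma nsp_g_bound (C : ℕ → ℝ) (n : ℕ) : ∃ M : ℝ, ∀ (a b T : ℝ) (h : ℝ → ℝ), a < b → 1 ≤ T →
    ContDiff ℝ (⊤ : ℕ∞) h → (∀ t ∈ Set.Icc a b, T ≤ |deriv h t|) →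
    (∀ j, 2 ≤ j → ∀ t ∈ Set.Icc a b, |iteratedDeriv j h t| ≤ C j) →
    ∀ i ≤ n, ∀ t ∈ Set.Icc a b,
      ‖iteratedDerivWithin i (fun t => T * (deriv h t)⁻¹) (Set.Icc a b) t‖ ≤ M := by
  induction n with
  | zero =>
    refine ⟨1, fun a b T h hab hT hh hd hj i hi t ht => ?_⟩
    obtain rfl : i = 0 := by omega
    have := hd t ht
    rw [iteratedDerivWithin_zero, norm_mul, norm_inv, Real.norm_eq_abs, Real.norm_eq_abs,
      abs_of_pos (by linarith : 0 < T), ← div_eq_mul_inv]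
    exact div_le_one_of_le₀ this (abs_nonneg _)
  | succ n ih =>
    obtain ⟨M, hM⟩ := ih
    refine ⟨max M (∑ i ∈ Finset.range (n + 1), (n.choose i : ℝ) * C (i + 2) *
      (∑ l ∈ Finset.range (n - i + 1), ((n - i).choose l : ℝ) * M * M)),
      fun a b T h hab hT hh hd hj i hi t ht => ?_⟩
    have hM' := hM a b T h hab hT hh hd hj
    rcases Nat.lt_or_ge n i with hlt | hge
    swap
    · exact (hM' i hge t ht).trans (le_max_left _ _)
    obtain rfl : i = n + 1 := by omega
    refine le_trans ?_ (le_max_right _ _)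
    have hs : UniqueDiffOn ℝ (Set.Icc a b) := uniqueDiffOn_Icc hab
    have hg := nsp_g_smooth (a := a) (b := b) hT hh hd
    have h1 : ContDiff ℝ (⊤ : ℕ∞) (deriv h) := (contDiff_infty_iff_deriv.1 hh).2
    have h2 : ContDiff ℝ (⊤ : ℕ∞) (deriv (deriv h)) := (contDiff_infty_iff_deriv.1 h1).2
    have hT0 : 0 < T := by linarith
    have key : Set.EqOn (derivWithin (fun t => T * (deriv h t)⁻¹) (Set.Icc a b))
        (fun t => ((-T⁻¹) * deriv (deriv h) t) •
          ((T * (deriv h t)⁻¹) • (T * (deriv h t)⁻¹))) (Set.Icc a b) := by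
      intro x hx
      have hne : deriv h x ≠ 0 := by
        intro h0
        have := hd x hx
        rw [h0, abs_zero] at this
        linarith
      have hD : HasDerivAt (fun t => T * (deriv h t)⁻¹)
          (T * (-(deriv (deriv h) x) / (deriv h x) ^ 2)) x :=
        (((h1.differentiable (by simp)) x).hasDerivAt.inv hne).const_mul T
      rw [hD.hasDerivWithinAt.derivWithin (hs x hx)]
      simp only [smul_eq_mul]
      field_simp
    rw [iteratedDerivWithin_succ', iteratedDerivWithin_congr key ht]
    refine nsp_smul_bound' hs (contDiff_const.mul h2).contDiffOn (hg.smul hg) ht n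
      (fun i => C (i + 2))
      (fun m => ∑ l ∈ Finset.range (m + 1), (m.choose l : ℝ) * M * M) ?_ ?_
    · intro i _
      rw [iteratedDerivWithin_const_mul_field, iteratedDerivWithin_eq_iteratedDeriv hs
        (h2.contDiffAt.of_le (by exact_mod_cast le_top)) ht, ← iteratedDeriv_succ',
        ← iteratedDeriv_succ', norm_mul, norm_neg, norm_inv, Real.norm_eq_abs, Real.norm_eq_abs,
        abs_of_pos hT0]
      have h3 := hj (i + 2) (by omega) t ht
      have h4 : T⁻¹ ≤ 1 := inv_le_one_of_one_le₀ hT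
      calc T⁻¹ * |iteratedDeriv (i + 1 + 1) h t| ≤ 1 * |iteratedDeriv (i + 2) h t| := by gcongr
        _ ≤ C (i + 2) := by rw [one_mul]; exact h3
    · intro m hm
      exact nsp_smul_bound' hs hg hg ht m (fun _ => M) (fun _ => M)
        (fun i hi => hM' i (hi.trans hm) t ht) (fun i hi => hM' i (hi.trans hm) t ht)

lemma nsp_exp_norm (x : ℝ) : ‖Complex.exp (2 * π * Complex.I * x)‖ = 1 := by
  have : (2 * π * Complex.I * x : ℂ) = ((2 * π * x : ℝ) : ℂ) * Complex.I := by
    push_cast; ring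
  rw [this, Complex.norm_exp_ofReal_mul_I]

lemma nsp_core (C : ℕ → ℝ) (N : ℕ) : ∀ C' : ℕ → ℝ, ∃ c : ℝ, ∀ (a b T : ℝ) (h : ℝ → ℝ) (F : ℝ → ℂ),
    a < b → 1 ≤ T →
    ContDiff ℝ (⊤ : ℕ∞) h → (∀ t ∈ Set.Icc a b, T ≤ |deriv h t|) →
    (∀ j, 2 ≤ j → ∀ t ∈ Set.Icc a b, |iteratedDeriv j h t| ≤ C j) →
    ContDiffOn ℝ (⊤ : ℕ∞) F (Set.Icc a b) →
    (∀ j, ∀ t ∈ Set.Icc a b, ‖iteratedDerivWithin j F (Set.Icc a b) t‖ ≤ C' j) →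
    (∀ j, iteratedDerivWithin j F (Set.Icc a b) a = 0) →
    (∀ j, iteratedDerivWithin j F (Set.Icc a b) b = 0) →
    ‖∫ t in a..b, F t * Complex.exp (2 * π * Complex.I * (h t))‖ ≤ c * (b - a) / T ^ N := by
  induction N with
  | zero =>
    refine fun C' => ⟨C' 0, fun a b T h F hab hT hh hd hj hF hFb hFa hFb' => ?_⟩
    have := intervalIntegral.norm_integral_le_of_norm_le_const (a := a) (b := b) (C := C' 0)
      (f := fun t => F t * Complex.exp (2 * π * Complex.I * (h t))) (fun t ht => by
        rw [norm_mul, nsp_exp_norm, mul_one]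
        rw [Set.uIoc_of_le hab.le] at ht
        simpa using hFb 0 t (Set.Ioc_subset_Icc_self ht))
    rw [abs_of_pos (by linarith : 0 < b - a)] at this
    simpa using this
  | succ N ih =>
    intro C'
    choose M hM using nsp_g_bound C
    obtain ⟨c, hc⟩ := ih (fun n => ∑ i ∈ Finset.range (n + 1 + 1), ((n + 1).choose i : ℝ) *
      M i * C' (n + 1 - i))
    refine ⟨c, fun a b T h F hab hT hh hd hj hF hFb hFa hFb' => ?_⟩
    have hs : UniqueDiffOn ℝ (Set.Icc a b) := uniqueDiffOn_Icc hab
    have hg := nsp_g_smooth (a := a) (b := b) hT hh hd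
    have hT0 : 0 < T := by linarith
    have hma : a ∈ Set.Icc a b := Set.left_mem_Icc.2 hab.le
    have hmb : b ∈ Set.Icc a b := Set.right_mem_Icc.2 hab.le
    set g : ℝ → ℝ := fun t => T * (deriv h t)⁻¹ with hgdef
    have hgb : ∀ j, ∀ t ∈ Set.Icc a b, ‖iteratedDerivWithin j g (Set.Icc a b) t‖ ≤ M j :=
      fun j t ht => hM j a b T h hab hT hh hd hj j le_rfl t ht
    have hu : ContDiffOn ℝ (⊤ : ℕ∞) (fun t => g t • F t) (Set.Icc a b) := hg.smul hF
    have hz : ∀ t ∈ Set.Icc a b, (∀ j, iteratedDerivWithin j F (Set.Icc a b) t = 0) → ∀ j,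
        iteratedDerivWithin j (fun t => g t • F t) (Set.Icc a b) t = 0 := by
      intro t ht h0 j
      have := nsp_smul_bound hs hg hF ht j
      simpa [h0] using this
    have hu' : ContDiffOn ℝ (⊤ : ℕ∞) (derivWithin (fun t => g t • F t) (Set.Icc a b))
        (Set.Icc a b) := hu.derivWithin hs (by simp)
    have hI := hc a b T h (derivWithin (fun t => g t • F t) (Set.Icc a b)) hab hT hh hd hj hu'
      (fun j t ht => by
        rw [← iteratedDerivWithin_succ']
        exact nsp_smul_bound' hs hg hF ht (j + 1) M C' (fun i _ => hgb i t ht)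
          (fun i _ => hFb i t ht))
      (fun j => by rw [← iteratedDerivWithin_succ']; exact hz a hma hFa _)
      (fun j => by rw [← iteratedDerivWithin_succ']; exact hz b hmb hFb' _)
    have hv : ∀ t, HasDerivAt (fun t : ℝ => Complex.exp (2 * π * Complex.I * (h t)))
        (Complex.exp (2 * π * Complex.I * (h t)) * (2 * π * Complex.I * (deriv h t : ℝ))) t := by
      intro t
      have h1 : HasDerivAt (fun t : ℝ => (h t : ℂ)) ((deriv h t : ℝ) : ℂ) t :=
        (hh.differentiable (by simp) t).hasDerivAt.ofReal_comp
      exact (h1.const_mul (2 * π * Complex.I)).cexp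
    have hvc : Continuous (fun t : ℝ => Complex.exp (2 * π * Complex.I * (h t))) :=
      continuous_iff_continuousAt.2 fun t => (hv t).continuousAt
    have hh' : Continuous (deriv h) := hh.continuous_deriv (by simp)
    have hparts := intervalIntegral.integral_deriv_mul_eq_sub_of_hasDerivAt (a := a) (b := b)
      (u := fun t => g t • F t)
      (u' := derivWithin (fun t => g t • F t) (Set.Icc a b))
      (v := fun t : ℝ => Complex.exp (2 * π * Complex.I * (h t)))
      (v' := fun t : ℝ => Complex.exp (2 * π * Complex.I * (h t)) *
        (2 * π * Complex.I * (deriv h t : ℝ)))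
      (by rw [Set.uIcc_of_le hab.le]; exact hu.continuousOn) hvc.continuousOn
      (by
        intro x hx
        rw [min_eq_left hab.le, max_eq_right hab.le] at hx
        have hd := (hu.differentiableOn (by simp) x (Set.Ioo_subset_Icc_self hx)).hasDerivWithinAt
        exact hd.hasDerivAt (Icc_mem_nhds hx.1 hx.2))
      (fun x _ => hv x)
      (by
        apply ContinuousOn.intervalIntegrable
        rw [Set.uIcc_of_le hab.le]; exact hu'.continuousOn)
      (by
        apply Continuous.intervalIntegrable
        fun_prop)
    have hFa0 : F a = 0 := by simpa using hFa 0
    have hFb0 : F b = 0 := by simpa using hFb' 0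
    simp only [hFa0, hFb0, smul_zero, zero_mul, sub_zero] at hparts
    have hcongr : ∫ x in a..b, (derivWithin (fun t => g t • F t) (Set.Icc a b) x *
          Complex.exp (2 * π * Complex.I * (h x)) + g x • F x *
          (Complex.exp (2 * π * Complex.I * (h x)) * (2 * π * Complex.I * (deriv h x : ℝ)))) =
        ∫ x in a..b, (derivWithin (fun t => g t • F t) (Set.Icc a b) x *
          Complex.exp (2 * π * Complex.I * (h x)) + (2 * π * Complex.I * T) *
            (F x * Complex.exp (2 * π * Complex.I * (h x)))) := by
      apply intervalIntegral.integral_congr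
      intro x hx
      rw [Set.uIcc_of_le hab.le] at hx
      have hne : deriv h x ≠ 0 := by
        intro h0
        have := hd x hx
        rw [h0, abs_zero] at this
        linarith
      have hne' : ((deriv h x : ℝ) : ℂ) ≠ 0 := by exact_mod_cast hne
      simp only [hgdef, Complex.real_smul]
      push_cast
      field_simp
    rw [hcongr, intervalIntegral.integral_add, intervalIntegral.integral_const_mul] at hparts
    · have h5 : (2 * π * Complex.I * T) *
          ∫ x in a..b, F x * Complex.exp (2 * π * Complex.I * (h x)) =
          - ∫ x in a..b, derivWithin (fun t => g t • F t) (Set.Icc a b) x *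
          Complex.exp (2 * π * Complex.I * (h x)) := by
        linear_combination hparts
      have h6 := congrArg norm h5
      rw [norm_neg, norm_mul] at h6
      have h7 : ‖(2 * π * Complex.I * T : ℂ)‖ = 2 * π * T := by
        simp [abs_of_pos hT0, abs_of_pos Real.pi_pos]
      rw [h7] at h6
      rw [← h6] at hI
      set J := ‖∫ x in a..b, F x * Complex.exp (2 * π * Complex.I * (h x))‖
      have hJ : 0 ≤ J := norm_nonneg _
      have h8 : T * J ≤ 2 * π * T * J := by
        have : 1 ≤ 2 * π := by linarith [Real.pi_gt_three]
        nlinarith [mul_nonneg hT0.le hJ]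
      have h9 := h8.trans hI
      rw [le_div_iff₀ (by positivity)] at h9 ⊢
      calc J * T ^ (N + 1) = T * J * T ^ N := by ring
        _ ≤ _ := h9
    · apply ContinuousOn.intervalIntegrable
      rw [Set.uIcc_of_le hab.le]; exact hu'.continuousOn.mul hvc.continuousOn
    · apply ContinuousOn.intervalIntegrable
      rw [Set.uIcc_of_le hab.le]
      exact continuousOn_const.mul (hF.continuousOn.mul hvc.continuousOn)

lemma nsp_vanish {a b : ℝ} {F : ℝ → ℂ} (hF : ContDiff ℝ (⊤ : ℕ∞) F)
    (h0 : ∀ t, t ∉ Set.Icc a b → F t = 0) (j : ℕ) :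
    iteratedDeriv j F a = 0 ∧ iteratedDeriv j F b = 0 := by
  have hc : Continuous (iteratedDeriv j F) := hF.continuous_iteratedDeriv j (by exact_mod_cast le_top)
  have hcl : IsClosed {x | iteratedDeriv j F x = 0} := isClosed_eq hc continuous_const
  have key : ∀ s : Set ℝ, IsOpen s → (∀ t ∈ s, F t = 0) →
      closure s ⊆ {x | iteratedDeriv j F x = 0} := by
    intro s hs h1
    refine closure_minimal (fun x hx => ?_) hcl
    have h2 : Set.EqOn F (fun _ => (0 : ℂ)) s := h1
    have := h2.iteratedDeriv_of_isOpen hs j hx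
    simpa using this
  constructor
  · apply key (Set.Iio a) isOpen_Iio (fun t ht => h0 t fun h => absurd h.1 (not_le.2 ht))
    simp
  · apply key (Set.Ioi b) isOpen_Ioi (fun t ht => h0 t fun h => absurd h.2 (not_le.2 ht))
    simp

/-- Non-stationary phase estimate: if `F` is smooth, supported in `[a,b]`, with
`|F^{(j)}| ≤ C'_j·X·U^{−j}`, and the phase `h` satisfies `|h'| ≥ R` and
`|h^{(j)}| ≤ C_j·Y·Q^{−j}` for `j ≥ 2` on `[a,b]`, then for every `A ≥ 0`,
`|∫ F(t)e(h(t))dt| ≤ C(A)·(b−a)·X·((QR/√Y)^{−A} + (RU)^{−A})`. -/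
theorem nonstationary_phase (C C' : ℕ → ℝ) (A : ℝ) (hA : 0 ≤ A) :
    ∃ c : ℝ, ∀ (a b : ℝ) (F : ℝ → ℂ) (h : ℝ → ℝ) (X U Y Q R : ℝ),
      a ≤ b → 0 < X → 0 < U → 1 ≤ Y → 0 < Q → 0 < R →
      ContDiff ℝ (⊤ : ℕ∞) F → ContDiff ℝ (⊤ : ℕ∞) h →
      (∀ t, t ∉ Set.Icc a b → F t = 0) →
      (∀ t ∈ Set.Icc a b, R ≤ |deriv h t|) →
      (∀ j, 2 ≤ j → ∀ t ∈ Set.Icc a b, |iteratedDeriv j h t| ≤ C j * Y / Q ^ j) →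
      (∀ (j : ℕ) (t : ℝ), ‖iteratedDeriv j F t‖ ≤ C' j * X / U ^ j) →
      ‖∫ t : ℝ, F t * Complex.exp (2 * π * Complex.I * (h t))‖ ≤
        c * (b - a) * X * ((Q * R / Real.sqrt Y) ^ (-A) + (R * U) ^ (-A)) := by
  obtain ⟨c0, hc0⟩ := nsp_core (fun j => |C j|) ⌈A⌉₊ (fun j => |C' j|)
  refine ⟨|C' 0| + |c0|, fun a b F h X U Y Q R hab hX hU hY hQ hR hF hh h0 hd hj hFj => ?_⟩
  have hY0 : 0 < √Y := Real.sqrt_pos.2 (by linarith)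
  have hI : ∫ t : ℝ, F t * Complex.exp (2 * π * Complex.I * (h t)) =
      ∫ t in a..b, F t * Complex.exp (2 * π * Complex.I * (h t)) := by
    rw [intervalIntegral.integral_of_le hab, ← MeasureTheory.integral_Icc_eq_integral_Ioc]
    refine (MeasureTheory.setIntegral_eq_integral_of_forall_compl_eq_zero fun t ht => ?_).symm
    rw [h0 t ht, zero_mul]
  rw [hI]
  rcases hab.eq_or_lt with rfl | hab
  · simp
  have hba : 0 < b - a := by linarith
  set W := min U (Q / √Y) with hW
  have hW0 : 0 < W := lt_min hU (by positivity)
  set P := Q * R / √Y with hP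
  set V := R * U with hV
  have hP0 : 0 < P := by positivity
  have hV0 : 0 < V := by positivity
  have hT0 : 0 < R * W := by positivity
  have hT : (R * W) ^ (-A) ≤ P ^ (-A) + V ^ (-A) := by
    have h1 := Real.rpow_nonneg hP0.le (-A)
    have h2 := Real.rpow_nonneg hV0.le (-A)
    rcases min_choice U (Q / √Y) with h3 | h3
    · rw [hW, h3]; linarith
    · have : R * W = P := by rw [hW, h3, hP]; ring
      rw [this]; linarith
  suffices hs : ‖∫ t in a..b, F t * Complex.exp (2 * π * Complex.I * (h t))‖ ≤
      (|C' 0| + |c0|) * (b - a) * X * (R * W) ^ (-A) from hs.trans (by gcongr)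
  rcases lt_or_ge (R * W) 1 with hlt | hge
  · have h1 : 1 ≤ (R * W) ^ (-A) := Real.one_le_rpow_of_pos_of_le_one_of_nonpos hT0 hlt.le (by linarith)
    have := intervalIntegral.norm_integral_le_of_norm_le_const (a := a) (b := b) (C := |C' 0| * X)
      (f := fun t => F t * Complex.exp (2 * π * Complex.I * (h t))) (fun t ht => by
        rw [norm_mul, nsp_exp_norm, mul_one]
        have h3 := hFj 0 t
        simp only [iteratedDeriv_zero, pow_zero, div_one] at h3
        refine h3.trans ?_
        gcongr
        exact le_abs_self _)
    rw [abs_of_pos hba] at this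
    calc _ ≤ _ := this
      _ = (|C' 0| + 0) * (b - a) * X * 1 := by ring
      _ ≤ _ := by gcongr; exact abs_nonneg _
  · have hdiv : a / W < b / W := by gcongr
    have hmem : ∀ t ∈ Set.Icc (a / W) (b / W), W * t ∈ Set.Icc a b := by
      intro t ht
      have h1 := ht.1
      have h2 := ht.2
      rw [div_le_iff₀ hW0] at h1
      rw [le_div_iff₀ hW0] at h2
      constructor <;> linarith
    have hmulc : ContDiff ℝ (⊤ : ℕ∞) (fun t : ℝ => W * t) := contDiff_const.mul contDiff_id
    have hh2 : ContDiff ℝ (⊤ : ℕ∞) (fun t => h (W * t)) := hh.comp hmulc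
    have hF1 : ContDiff ℝ (⊤ : ℕ∞) (fun t => F (W * t)) := hF.comp hmulc
    have hF2 : ContDiff ℝ (⊤ : ℕ∞) (fun t => X⁻¹ • F (W * t)) := hF1.const_smul X⁻¹
    have hsd : UniqueDiffOn ℝ (Set.Icc (a / W) (b / W)) := uniqueDiffOn_Icc hdiv
    have hit : ∀ j, ∀ t ∈ Set.Icc (a / W) (b / W),
        iteratedDerivWithin j (fun t => X⁻¹ • F (W * t)) (Set.Icc (a / W) (b / W)) t =
          X⁻¹ • (W ^ j • iteratedDeriv j F (W * t)) := by
      intro j t ht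
      rw [iteratedDerivWithin_eq_iteratedDeriv hsd
        (hF2.contDiffAt.of_le (by exact_mod_cast le_top)) ht, iteratedDeriv_fun_const_smul_field,
        iteratedDeriv_comp_const_smul (hF.of_le (by exact_mod_cast le_top))]
    have hWa : W * (a / W) = a := by field_simp
    have hWb : W * (b / W) = b := by field_simp
    have := hc0 (a / W) (b / W) (R * W) (fun t => h (W * t)) (fun t => X⁻¹ • F (W * t)) hdiv hge hh2
      (fun t ht => by
        have h1 : HasDerivAt (fun t => h (W * t)) (deriv h (W * t) * (W * 1)) t :=
          HasDerivAt.comp t (hh.differentiable (by simp) (W * t)).hasDerivAt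
            ((hasDerivAt_id t).const_mul W)
        rw [h1.deriv, abs_mul, mul_one, abs_of_pos hW0]
        have := hd _ (hmem t ht)
        gcongr)
      (fun j hj2 t ht => by
        rw [iteratedDeriv_comp_const_mul (hh.of_le (by exact_mod_cast le_top))]
        simp only
        rw [abs_mul, abs_of_pos (pow_pos hW0 j)]
        have h1 := hj j hj2 _ (hmem t ht)
        have h2 : W ^ j * Y ≤ Q ^ j := by
          have h3 : W * √Y ≤ Q := by
            rw [← le_div_iff₀ hY0]; exact min_le_right _ _
          have h4 : Y ≤ √Y ^ j := by
            calc Y = √Y ^ 2 := (Real.sq_sqrt (by linarith)).symm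
              _ ≤ √Y ^ j := pow_le_pow_right₀ (Real.one_le_sqrt.2 hY) hj2
          calc W ^ j * Y ≤ W ^ j * √Y ^ j := by gcongr
            _ = (W * √Y) ^ j := by rw [mul_pow]
            _ ≤ Q ^ j := by gcongr
        calc W ^ j * |iteratedDeriv j h (W * t)| ≤ W ^ j * (C j * Y / Q ^ j) := by gcongr
          _ ≤ W ^ j * (|C j| * Y / Q ^ j) := by gcongr; exact le_abs_self _
          _ = |C j| * (W ^ j * Y / Q ^ j) := by ring
          _ ≤ |C j| * 1 := by
            gcongr
            exact div_le_one_of_le₀ h2 (by positivity)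
          _ = |C j| := mul_one _)
      hF2.contDiffOn
      (fun j t ht => by
        rw [hit j t ht, norm_smul, norm_smul, norm_inv, norm_pow, Real.norm_eq_abs,
          Real.norm_eq_abs, abs_of_pos hX, abs_of_pos hW0]
        have h1 := hFj j (W * t)
        calc X⁻¹ * (W ^ j * ‖iteratedDeriv j F (W * t)‖) ≤ X⁻¹ * (U ^ j * (C' j * X / U ^ j)) := by
              gcongr
              exact min_le_left _ _
          _ = C' j := by field_simp
          _ ≤ |C' j| := le_abs_self _)
      (fun j => by
        rw [hit j _ (Set.left_mem_Icc.2 hdiv.le), hWa, (nsp_vanish hF h0 j).1]; simp)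
      (fun j => by
        rw [hit j _ (Set.right_mem_Icc.2 hdiv.le), hWb, (nsp_vanish hF h0 j).2]; simp)
    have hsc : ∫ t in (a / W)..(b / W), X⁻¹ • F (W * t) *
        Complex.exp (2 * π * Complex.I * (h (W * t))) =
        X⁻¹ • W⁻¹ • ∫ t in a..b, F t * Complex.exp (2 * π * Complex.I * (h t)) := by
      have h1 := intervalIntegral.integral_comp_mul_left (a := a / W) (b := b / W)
        (fun t => F t * Complex.exp (2 * π * Complex.I * (h t))) hW0.ne'
      rw [hWa, hWb] at h1
      rw [← h1, ← intervalIntegral.integral_smul]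
      simp only [smul_mul_assoc]
    rw [hsc, norm_smul, norm_smul, norm_inv, norm_inv, Real.norm_eq_abs, Real.norm_eq_abs,
      abs_of_pos hX, abs_of_pos hW0] at this
    set J := ‖∫ t in a..b, F t * Complex.exp (2 * π * Complex.I * (h t))‖
    have h3 : ((R * W) ^ ⌈A⌉₊)⁻¹ ≤ (R * W) ^ (-A) := by
      rw [← Real.rpow_natCast, ← Real.rpow_neg hT0.le]
      exact Real.rpow_le_rpow_of_exponent_le hge (neg_le_neg (Nat.le_ceil A))
    calc J = X * W * (X⁻¹ * (W⁻¹ * J)) := by field_simp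
      _ ≤ X * W * (c0 * (b / W - a / W) / (R * W) ^ ⌈A⌉₊) := by gcongr
      _ = c0 * ((b - a) * X * ((R * W) ^ ⌈A⌉₊)⁻¹) := by field_simp
      _ ≤ (|C' 0| + |c0|) * ((b - a) * X * ((R * W) ^ ⌈A⌉₊)⁻¹) := by
        gcongr
        linarith [le_abs_self c0, abs_nonneg (C' 0)]
      _ ≤ (|C' 0| + |c0|) * ((b - a) * X * (R * W) ^ (-A)) := by gcongr
      _ = _ := by ring
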